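/- Let Z be a unique factorization domain, let f ∈ Z[X] be irreducible in Z[X] of positive degree, let p be an odd prime, and let s ≥ 1 be an integer. Then f(X^{p^s}) is not irreducible in Z[X] if and only if f(X^p) is not irreducible in Z[X]. -/

import Mathlib

open Polynomial

/-!
Gauss's lemma moves the problem to the fraction field `K`, where `f` may be taken to be the minimal
polynomial of some `x`. By Capelli's lemma `f(X ^ n)` is irreducible over `K` as soon as `X ^ n - x`
is irreducible over `K(x)`, and for odd `n` this only requires that `x` is not a `p`-th power in
`K(x)` for the primes `p ∣ n`. If `b ^ p = x` with `b ∈ K(x)` and `f(X ^ p)` were irreducible, then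
`f(X ^ p)` would be the minimal polynomial of `b`, whose degree `p * deg f` exceeds `[K(x) : K]`.
-/

lemma isPrimitive_expand {R : Type*} [CommSemiring R] {f : R[X]} (hf : f.IsPrimitive)
    {n : ℕ} (hn : 0 < n) : (expand R n f).IsPrimitive := by
  intro r hr
  rw [C_dvd_iff_dvd_coeff] at hr
  refine hf r ((C_dvd_iff_dvd_coeff r f).2 fun i ↦ ?_)
  simpa only [coeff_expand_mul hn] using hr (i * n)

section Domain

variable {R : Type*} [CommRing R] [IsDomain R]

lemma irreducible_expand_of_dvd {f : R[X]} {m n : ℕ} (hn : n ≠ 0) (hmn : m ∣ n)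
    (h : Irreducible (expand R n f)) : Irreducible (expand R m f) := by
  obtain ⟨k, rfl⟩ := hmn
  rw [mul_comm, expand_mul] at h
  exact of_irreducible_expand (right_ne_zero_of_mul hn) h

lemma irreducible_expand_iff_irreducible_expand_map [IsGCDMonoid R]
    (K : Type*) [Field K] [Algebra R K] [IsFractionRing R K]
    {f : R[X]} (hf : f.IsPrimitive) {n : ℕ} (hn : 0 < n) :
    Irreducible (expand R n f) ↔ Irreducible (expand K n (f.map (algebraMap R K))) := by
  rw [(isPrimitive_expand hf hn).irreducible_iff_irreducible_map_fraction_map (K := K), map_expand]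

end Domain

section Field

variable {K : Type*} [Field K]

lemma minpoly_eq_expand_minpoly_pow {A : Type*} [Ring A] [Nontrivial A] [Algebra K A] {b : A}
    {n : ℕ} (hn : 0 < n) (h : Irreducible (expand K n (minpoly K (b ^ n)))) :
    minpoly K b = expand K n (minpoly K (b ^ n)) := by
  have hint : IsIntegral K (b ^ n) :=
    minpoly.ne_zero_iff.1 (of_irreducible_expand hn.ne' h).ne_zero
  have hroot : aeval b (expand K n (minpoly K (b ^ n))) = 0 := by
    rw [expand_aeval, minpoly.aeval]
  exact (minpoly.eq_of_irreducible_of_monic h hroot (.expand hn (minpoly.monic hint))).symm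

lemma pow_ne_of_irreducible_expand_minpoly {L : Type*} [Ring L] [Nontrivial L] [Algebra K L]
    [FiniteDimensional K L] {a : L} (ha : (minpoly K a).natDegree = Module.finrank K L)
    {n : ℕ} (hn : 1 < n) (h : Irreducible (expand K n (minpoly K a))) (b : L) : b ^ n ≠ a := by
  rintro rfl
  have hpos : 0 < (minpoly K (b ^ n)).natDegree := minpoly.natDegree_pos (.of_finite K _)
  have hle : (minpoly K (b ^ n)).natDegree * n ≤ (minpoly K (b ^ n)).natDegree :=
    calc (minpoly K (b ^ n)).natDegree * n
        = (minpoly K b).natDegree := by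
          rw [minpoly_eq_expand_minpoly_pow (by lia) h, natDegree_expand]
      _ ≤ Module.finrank K L := minpoly.natDegree_le b
      _ = (minpoly K (b ^ n)).natDegree := ha.symm
  exact hle.not_gt (lt_mul_of_one_lt_right hpos hn)

open IntermediateField in
lemma irreducible_expand_of_odd_of_monic {f : K[X]} (hmonic : f.Monic) (hf : Irreducible f)
    {n : ℕ} (hn : Odd n) (h : ∀ p : ℕ, p.Prime → p ∣ n → Irreducible (expand K p f)) :
    Irreducible (expand K n f) := by
  rw [expand_eq_comp_X_pow]
  refine irreducible_comp hmonic (monic_X_pow n) hf fun E _ _ x hx ↦ ?_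
  subst hx
  have hx : IsIntegral K x := minpoly.ne_zero_iff.1 hf.ne_zero
  have : FiniteDimensional K K⟮x⟯ := adjoin.finiteDimensional hx
  rw [Polynomial.map_pow, map_X]
  refine X_pow_sub_C_irreducible_of_odd hn fun p hp hpn ↦
    pow_ne_of_irreducible_expand_minpoly (K := K) ?_ hp.one_lt ?_
  · rw [minpoly_gen, adjoin.finrank hx]
  · rw [minpoly_gen]
    exact h p hp hpn

lemma irreducible_expand_of_odd {f : K[X]} (hf : Irreducible f) {n : ℕ} (hn : Odd n)
    (h : ∀ p : ℕ, p.Prime → p ∣ n → Irreducible (expand K p f)) :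
    Irreducible (expand K n f) := by
  classical
  have hassoc (m : ℕ) : Associated (expand K m f) (expand K m (normalize f)) :=
    (associated_normalize f).map (expand K m)
  rw [(hassoc n).irreducible_iff]
  refine irreducible_expand_of_odd_of_monic (monic_normalize hf.ne_zero)
    ((associated_normalize f).irreducible hf) hn fun p hp hpn ↦ ?_
  exact (hassoc p).irreducible (h p hp hpn)

end Field

theorem stmt9_general {R : Type*} [CommRing R] [IsDomain R] [IsGCDMonoid R]
    {f : R[X]} (hf : Irreducible f) {n : ℕ} (hn : Odd n) :
    Irreducible (f.comp (X ^ n)) ↔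
      ∀ p : ℕ, p.Prime → p ∣ n → Irreducible (f.comp (X ^ p)) := by
  simp only [← expand_eq_comp_X_pow]
  refine ⟨fun h p _ hpn ↦ irreducible_expand_of_dvd hn.pos.ne' hpn h, fun h ↦ ?_⟩
  rcases eq_or_ne f.natDegree 0 with hconst | hdeg
  · obtain ⟨a, rfl⟩ := natDegree_eq_zero.1 hconst
    rwa [expand_C]
  have hprim : f.IsPrimitive := hf.isPrimitive hdeg
  let K := FractionRing R
  rw [irreducible_expand_iff_irreducible_expand_map K hprim hn.pos]
  refine irreducible_expand_of_odd (hprim.irreducible_iff_irreducible_map_fraction_map.1 hf) hn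
    fun p hp hpn ↦ ?_
  exact (irreducible_expand_iff_irreducible_expand_map K hprim hp.pos).1 (h p hp hpn)

theorem stmt9 {Z : Type*} [CommRing Z] [IsDomain Z] [UniqueFactorizationMonoid Z]
    (f : Polynomial Z) (hf : Irreducible f) (hdeg : 0 < f.natDegree)
    (p : ℕ) (hp : p.Prime) (hodd : Odd p) (s : ℕ) (hs : 1 ≤ s) :
    ¬ Irreducible (f.comp (X ^ p ^ s)) ↔ ¬ Irreducible (f.comp (X ^ p)) := by
  rw [not_iff_not, stmt9_general hf hodd.pow]
  exact ⟨fun h ↦ h p hp (dvd_pow_self p (by lia)),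
    fun h q hq hqp ↦ Nat.prime_eq_prime_of_dvd_pow hq hp hqp ▸ h⟩
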